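/- arXiv:1201.6403 — 5 statements merged into one kernel-verified Lean document; each statement's English description precedes it below -/
import Mathlib

section
/- Let n ≥ 1 and d ≥ 1 be integers and let a_1, …, a_n ≥ 1 be integers with gcd(d, a_1, …, a_n) = 1. Consider the ℂ-algebra homomorphism ℂ[x_1, …, x_n, y] → ℂ[u_1, …, u_n] determined by x_i ↦ u_i^d (for i = 1, …, n) and y ↦ u_1^{a_1}·u_2^{a_2}⋯u_n^{a_n}. Then the kernel of this homomorphism is exactly the principal ideal generated by y^d − x_1^{a_1}⋯x_n^{a_n}. In particular, ℂ[x_1, …, x_n, y]/(y^d − x_1^{a_1}⋯x_n^{a_n}) is isomorphic to the subalgebra of ℂ[u_1, …, u_n] generated by u_1^d, …, u_n^d and u_1^{a_1}⋯u_n^{a_n}. -/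
open MvPolynomial

/-! The map sends monomials to monomials, so its kernel is spanned by the differences of two
monomials with the same image. If `x^p y^q` and `x^p' y^q'` have the same image and `q ≤ q'`, then
`d pᵢ = d p'ᵢ + aᵢ (q' - q)` for all `i`; the `gcd` condition forces `q' - q = d k`, hence
`pᵢ = p'ᵢ + aᵢ k`, and the difference of the two monomials is `x^p' y^q ((x^a)^k - (y^d)^k)`,
a multiple of `x^a - y^d`. -/

lemma ker_le_of_forall_basis_sub_mem {R M M' ι κ : Type*} [Ring R] [AddCommGroup M] [Module R M]
    [AddCommGroup M'] [Module R M'] (b : Module.Basis ι R M) (b' : Module.Basis κ R M')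
    {v : ι → κ} {f : M →ₗ[R] M'} (hf : ∀ i, f (b i) = b' (v i)) {N : Submodule R M}
    (hN : ∀ i j, v i = v j → b i - b j ∈ N) : LinearMap.ker f ≤ N := by
  -- `N.mkQ` factors through `f`, since on the basis it factors through `v`.
  let g : M' →ₗ[R] M ⧸ N := b'.constr ℕ (Function.extend v (N.mkQ ∘ b) 0)
  have hv : (N.mkQ ∘ b).FactorsThrough v := fun i j hij ↦
    (Submodule.Quotient.eq N).2 (hN i j hij)
  have hg : g ∘ₗ f = N.mkQ := b.ext fun i ↦ by
    simp only [g, LinearMap.comp_apply, hf, Module.Basis.constr_basis, hv.extend_apply,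
      Function.comp_apply]
  calc LinearMap.ker f ≤ LinearMap.ker (g ∘ₗ f) := LinearMap.ker_le_ker_comp f g
    _ = N := by rw [hg, Submodule.ker_mkQ]

lemma dvd_of_coprime_gcd_of_forall_dvd_mul {ι : Type*} {s : Finset ι} {a : ι → ℕ} {d m : ℕ}
    (hcop : d.Coprime (s.gcd a)) (h : ∀ i ∈ s, d ∣ a i * m) : d ∣ m := by
  have hdvd : d ∣ s.gcd fun i ↦ a i * m := Finset.dvd_gcd h
  rw [Finset.gcd_mul_right, normalize_eq] at hdvd
  exact hcop.dvd_of_dvd_mul_left hdvd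

lemma exists_eq_add_mul_of_forall_mul_add_mul_eq {ι : Type*} [Fintype ι] {a p p' : ι → ℕ}
    {d q q' : ℕ} (hd : 0 < d) (hcop : d.Coprime (Finset.univ.gcd a)) (hq : q ≤ q')
    (h : ∀ i, d * p i + a i * q = d * p' i + a i * q') :
    ∃ k, q' = q + d * k ∧ ∀ i, p i = p' i + a i * k := by
  obtain ⟨m, rfl⟩ := Nat.exists_eq_add_of_le hq
  have hm (i) : d * p i = d * p' i + a i * m := by linarith [h i]
  obtain ⟨k, rfl⟩ : d ∣ m := dvd_of_coprime_gcd_of_forall_dvd_mul hcop fun i _ ↦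
    (Nat.dvd_add_right (dvd_mul_right d (p' i))).1 ⟨p i, (hm i).symm⟩
  refine ⟨k, rfl, fun i ↦ Nat.eq_of_mul_eq_mul_left hd ?_⟩
  rw [hm i]
  ring

lemma monomial_one_eq_prod_X_pow {σ R : Type*} [Fintype σ] [CommSemiring R] (e : σ →₀ ℕ) :
    monomial e (1 : R) = ∏ i, X i ^ e i := by
  rw [monomial_eq, C_1, one_mul, Finsupp.prod_fintype _ _ fun i ↦ pow_zero (X i)]

section PowMonomialMap

variable (R : Type*) [CommRing R] {n : ℕ} (d : ℕ) (a : Fin n → ℕ)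

/-- The algebra map `R[x₁, …, xₙ, y] → R[u₁, …, uₙ]`, `xᵢ ↦ uᵢ^d`, `y ↦ u₁^{a₁} ⋯ uₙ^{aₙ}`,
with `y` encoded as the last variable. -/
noncomputable def powMonomialMap : MvPolynomial (Fin (n + 1)) R →ₐ[R] MvPolynomial (Fin n) R :=
  aeval fun i ↦ Fin.lastCases (∏ j, X j ^ a j) (fun j ↦ X j ^ d) i

/-- The binomial `y^d - x₁^{a₁} ⋯ xₙ^{aₙ}`, which generates the kernel of `powMonomialMap R d a`. -/
noncomputable def powMonomialRelation : MvPolynomial (Fin (n + 1)) R :=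
  X (Fin.last n) ^ d - ∏ i : Fin n, X i.castSucc ^ a i

/-- The map on exponent vectors induced by `powMonomialMap R d a`. -/
noncomputable def powMonomialExponent (e : Fin (n + 1) →₀ ℕ) : Fin n →₀ ℕ :=
  Finsupp.equivFunOnFinite.symm fun i ↦ d * e i.castSucc + a i * e (Fin.last n)

lemma powMonomialMap_X_castSucc (i : Fin n) :
    powMonomialMap R d a (X i.castSucc) = X i ^ d := by
  simp only [powMonomialMap, aeval_X, Fin.lastCases_castSucc]

lemma powMonomialMap_X_last :
    powMonomialMap R d a (X (Fin.last n)) = ∏ i, X i ^ a i := by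
  simp only [powMonomialMap, aeval_X, Fin.lastCases_last]

lemma powMonomialMap_monomial_one (e : Fin (n + 1) →₀ ℕ) :
    powMonomialMap R d a (monomial e 1) = monomial (powMonomialExponent d a e) 1 := by
  simp only [monomial_one_eq_prod_X_pow, Fin.prod_univ_castSucc, map_mul, map_prod, map_pow,
    powMonomialMap_X_castSucc, powMonomialMap_X_last, powMonomialExponent,
    Finsupp.equivFunOnFinite_symm_apply_apply, pow_add, pow_mul, Finset.prod_mul_distrib,
    Finset.prod_pow]

lemma powMonomialMap_powMonomialRelation :
    powMonomialMap R d a (powMonomialRelation R d a) = 0 := by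
  simp only [powMonomialRelation, map_sub, map_prod, map_pow, powMonomialMap_X_castSucc,
    powMonomialMap_X_last, ← Finset.prod_pow, pow_right_comm _ d, sub_self]

lemma range_powMonomialMap :
    (powMonomialMap R d a).range = Algebra.adjoin R
      ((Set.range fun j ↦ X j ^ d) ∪ {∏ j, X j ^ a j}) := by
  rw [powMonomialMap, ← Algebra.adjoin_range_eq_range_aeval]
  congr 1
  ext p
  simp only [Set.mem_range, Fin.exists_fin_succ', Fin.lastCases_castSucc,
    Fin.lastCases_last, Set.mem_union, Set.mem_singleton_iff, eq_comm (b := p)]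

variable {d a}

lemma powMonomialRelation_dvd_monomial_sub_monomial {e e' : Fin (n + 1) →₀ ℕ} {k : ℕ}
    (hlast : e' (Fin.last n) = e (Fin.last n) + d * k)
    (hcast : ∀ i : Fin n, e i.castSucc = e' i.castSucc + a i * k) :
    powMonomialRelation R d a ∣ monomial e' 1 - monomial e 1 := by
  have hfactor : (monomial e' 1 - monomial e 1 : MvPolynomial (Fin (n + 1)) R) =
      (∏ i : Fin n, X i.castSucc ^ e' i.castSucc) * X (Fin.last n) ^ e (Fin.last n) *
        ((X (Fin.last n) ^ d) ^ k - (∏ i : Fin n, X i.castSucc ^ a i) ^ k) := by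
    simp only [monomial_one_eq_prod_X_pow, Fin.prod_univ_castSucc, hlast, hcast, pow_add, pow_mul,
      Finset.prod_mul_distrib, Finset.prod_pow]
    ring
  rw [hfactor]
  exact (sub_dvd_pow_sub_pow _ _ k).mul_left _

lemma monomial_sub_monomial_mem_span_powMonomialRelation (hd : 0 < d)
    (hcop : d.Coprime (Finset.univ.gcd a)) {e e' : Fin (n + 1) →₀ ℕ}
    (h : powMonomialExponent d a e = powMonomialExponent d a e') :
    monomial e 1 - monomial e' 1 ∈ Ideal.span {powMonomialRelation R d a} := by
  wlog hle : e (Fin.last n) ≤ e' (Fin.last n) generalizing e e'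
  · exact sub_mem_comm_iff.1 (this h.symm (le_of_not_ge hle))
  obtain ⟨k, hlast, hcast⟩ := exists_eq_add_mul_of_forall_mul_add_mul_eq hd hcop hle
    (congrFun (Finsupp.equivFunOnFinite.symm.injective h))
  rw [sub_mem_comm_iff, Ideal.mem_span_singleton]
  exact powMonomialRelation_dvd_monomial_sub_monomial R hlast hcast

theorem ker_powMonomialMap (hd : 0 < d) (hcop : d.Coprime (Finset.univ.gcd a)) :
    RingHom.ker (powMonomialMap R d a) = Ideal.span {powMonomialRelation R d a} := by
  apply le_antisymm
  · exact ker_le_of_forall_basis_sub_mem (basisMonomials _ R) (basisMonomials _ R)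
      (f := (powMonomialMap R d a).toLinearMap)
      (N := (Ideal.span {powMonomialRelation R d a}).restrictScalars R)
      (powMonomialMap_monomial_one R d a)
      fun _ _ ↦ monomial_sub_monomial_mem_span_powMonomialRelation R hd hcop
  · rw [Ideal.span_singleton_le_iff_mem, RingHom.mem_ker, powMonomialMap_powMonomialRelation]

theorem stmt_1_general (hd : 0 < d) (hcop : d.Coprime (Finset.univ.gcd a)) :
    RingHom.ker (powMonomialMap R d a) = Ideal.span {powMonomialRelation R d a} ∧
      Nonempty ((MvPolynomial (Fin (n + 1)) R ⧸ Ideal.span {powMonomialRelation R d a}) ≃ₐ[R]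
        Algebra.adjoin R ((Set.range fun j : Fin n ↦ (X j : MvPolynomial (Fin n) R) ^ d) ∪
          {∏ j : Fin n, (X j : MvPolynomial (Fin n) R) ^ a j})) := by
  have hker := ker_powMonomialMap R hd hcop
  exact ⟨hker, ⟨(Ideal.quotientEquivAlgOfEq R hker.symm).trans <|
    (Ideal.quotientKerEquivRange (powMonomialMap R d a)).trans <|
      Subalgebra.equivOfEq _ _ (range_powMonomialMap R d a)⟩⟩

end PowMonomialMap

/-- For `n ≥ 1`, `d ≥ 1` and `a₁, …, aₙ ≥ 1` with
`gcd(d, a₁, …, aₙ) = 1`, the kernel of the `ℂ`-algebra map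
`ℂ[x₁, …, xₙ, y] → ℂ[u₁, …, uₙ]`, `xᵢ ↦ uᵢ^d`, `y ↦ u₁^{a₁} ⋯ uₙ^{aₙ}`, is the
principal ideal generated by `y^d - x₁^{a₁} ⋯ xₙ^{aₙ}`; in particular the
quotient by this ideal is isomorphic to the subalgebra of `ℂ[u₁, …, uₙ]`
generated by `u₁^d, …, uₙ^d` and `u₁^{a₁} ⋯ uₙ^{aₙ}`. -/
theorem stmt_1 (n d : ℕ) (hn : 1 ≤ n) (hd : 1 ≤ d) (a : Fin n → ℕ)
    (ha : ∀ i, 1 ≤ a i) (hgcd : Nat.gcd d (Finset.univ.gcd a) = 1) :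
    RingHom.ker (MvPolynomial.aeval
        (fun i : Fin (n + 1) => Fin.lastCases
          (∏ j : Fin n, (X j : MvPolynomial (Fin n) ℂ) ^ a j)
          (fun j : Fin n => (X j : MvPolynomial (Fin n) ℂ) ^ d) i) :
        MvPolynomial (Fin (n + 1)) ℂ →ₐ[ℂ] MvPolynomial (Fin n) ℂ) =
      Ideal.span {(X (Fin.last n) : MvPolynomial (Fin (n + 1)) ℂ) ^ d -
        ∏ i : Fin n, X i.castSucc ^ a i} ∧
    Nonempty ((MvPolynomial (Fin (n + 1)) ℂ ⧸
        Ideal.span {(X (Fin.last n) : MvPolynomial (Fin (n + 1)) ℂ) ^ d -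
          ∏ i : Fin n, X i.castSucc ^ a i}) ≃ₐ[ℂ]
      Algebra.adjoin ℂ
        ((Set.range fun j : Fin n => (X j : MvPolynomial (Fin n) ℂ) ^ d) ∪
          {∏ j : Fin n, (X j : MvPolynomial (Fin n) ℂ) ^ a j})) :=
  stmt_1_general ℂ hd hgcd
end

section
/- Let n ≥ 1 and d ≥ 1 be integers. The quotient ring R = ℂ[x_1, …, x_n, y]/(y^d − x_1·x_2⋯x_n) is an integral domain which is integrally closed in its field of fractions (i.e. R is a normal domain). -/
open MvPolynomial

/-!
Write `t₁, …, tₙ` for the coordinates of affine space. The substitution `xᵢ ↦ tᵢ ^ d`,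
`y ↦ t₁ ⋯ tₙ` maps `R = k[x₁, …, xₙ, y] / (y ^ d - x₁ ⋯ xₙ)` to `k[t₁, …, tₙ]`, and the monomials
in its image are those whose exponents are all congruent modulo `d`. Killing every other monomial
gives an `R`-linear retraction `k[t₁, …, tₙ] → R`. Hence divisibility between elements of `R` can be
tested in the normal domain `k[t₁, …, tₙ]`, so `R` is a domain, and a fraction `a / b` integral over
`R`, being a polynomial in the `tᵢ`, already lies in `R`.
-/

section DvdReflecting

theorem dvd_of_map_dvd_map_of_retraction {M N : Type*} [Monoid M] [Monoid N] {φ : M → N}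
    {ρ : N → M} (hρ_one : ρ 1 = 1) (hρ_mul : ∀ a b, ρ (φ a * b) = a * ρ b) {a b : M}
    (h : φ a ∣ φ b) : a ∣ b := by
  obtain ⟨c, hc⟩ := h
  refine ⟨ρ c, ?_⟩
  calc b = ρ (φ b * 1) := by rw [hρ_mul, hρ_one, mul_one]
    _ = a * ρ c := by rw [mul_one, hc, hρ_mul]

theorem injective_of_map_dvd_map {R S : Type*} [Ring R] [Ring S] {φ : R →+* S}
    (hφ : ∀ a b, φ a ∣ φ b → a ∣ b) : Function.Injective φ := by
  refine (injective_iff_map_eq_zero φ).mpr fun a ha ↦ zero_dvd_iff.mp (hφ 0 a ?_)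
  rw [ha, map_zero]

theorem isIntegrallyClosed_of_map_dvd_map {R S : Type*} [CommRing R] [CommRing S] [IsDomain S]
    [IsIntegrallyClosed S] {φ : R →+* S} (hφ : ∀ a b, φ a ∣ φ b → a ∣ b) :
    IsIntegrallyClosed R := by
  have φ_inj := injective_of_map_dvd_map hφ
  have : IsDomain R := φ_inj.isDomain φ
  refine (isIntegrallyClosed_iff (FractionRing R)).mpr fun {z} hz ↦ ?_
  let ψ : FractionRing R →+* FractionRing S := IsFractionRing.map φ_inj
  have ψ_algebraMap (r : R) : ψ (algebraMap R _ r) = algebraMap S _ (φ r) :=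
    IsLocalization.map_eq _ r
  have ψz_integral : IsIntegral S (ψ z) :=
    hz.map_of_comp_eq φ ψ (RingHom.ext fun r ↦ (ψ_algebraMap r).symm)
  obtain ⟨c, hc⟩ := IsIntegrallyClosed.isIntegral_iff.mp ψz_integral
  obtain ⟨a, b, hb, rfl⟩ := IsFractionRing.div_surjective (A := R) z
  have hb₀ : b ≠ 0 := nonZeroDivisors.ne_zero hb
  have φb_ne_zero : algebraMap S (FractionRing S) (φ b) ≠ 0 := by
    simpa [map_eq_zero_iff φ φ_inj] using hb₀
  have φa_eq : φ a = φ b * c := by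
    apply IsFractionRing.injective S (FractionRing S)
    rw [map_mul, hc, map_div₀, ψ_algebraMap, ψ_algebraMap, mul_div_cancel₀ _ φb_ne_zero]
  obtain ⟨r, rfl⟩ := hφ b a ⟨c, φa_eq⟩
  refine ⟨r, ?_⟩
  rw [map_mul, mul_div_cancel_left₀ _ (by simpa using hb₀)]

end DvdReflecting

attribute [local instance] MvPolynomial.algebraMvPolynomial in
theorem isIntegrallyClosed_mvPolynomial (σ k : Type*) [CommRing k] [IsDomain k]
    [IsIntegrallyClosed k] : IsIntegrallyClosed (MvPolynomial σ k) := by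
  let K := FractionRing k
  have : IsIntegrallyClosed (MvPolynomial σ K) := UniqueFactorizationMonoid.instIsIntegrallyClosed
  suffices IsIntegrallyClosedIn (MvPolynomial σ k) (MvPolynomial σ K) from
    .of_isIntegrallyClosed_of_isIntegrallyClosedIn _ (MvPolynomial σ K)
  refine isIntegrallyClosedIn_iff.mpr
    ⟨map_injective _ (IsFractionRing.injective k K), fun {p} hp ↦ ?_⟩
  refine mem_range_map_iff_coeffs_subset.mpr fun c hc ↦ ?_
  obtain ⟨e, -, rfl⟩ := mem_coeffs_iff.mp hc
  exact IsIntegrallyClosed.isIntegral_iff.mp (isIntegral_iff_isIntegral_coeff.mp hp e)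

theorem map_mul_of_adjoin_eq_top {k A B : Type*} [CommSemiring k] [Semiring A] [Semiring B]
    [Algebra k A] [Algebra k B] {s : Set A} (hs : Algebra.adjoin k s = ⊤) {φ : A →ₐ[k] B}
    {ρ : B →ₗ[k] A} (h : ∀ a ∈ s, ∀ b, ρ (φ a * b) = a * ρ b) (a : A) (b : B) :
    ρ (φ a * b) = a * ρ b := by
  have ha : a ∈ Algebra.adjoin k s := hs ▸ Algebra.mem_top
  induction ha using Algebra.adjoin_induction generalizing b with
  | mem a ha => exact h a ha b
  | algebraMap r => simp only [AlgHom.commutes, ← Algebra.smul_def, map_smul]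
  | add a₁ a₂ _ _ h₁ h₂ => simp only [map_add, add_mul, h₁, h₂]
  | mul a₁ a₂ _ _ h₁ h₂ => simp only [map_mul, mul_assoc, h₁, h₂]

/-- The coordinate ring `k[x₁, …, xₙ, y] / (y ^ d - x₁ ⋯ xₙ)` of the cyclic `d`-fold cover of
affine `n`-space branched over the coordinate hyperplanes. The variable `y` is the last one. -/
abbrev CyclicCover (k : Type*) [CommRing k] (n d : ℕ) : Type _ :=
  MvPolynomial (Fin (n + 1)) k ⧸
    Ideal.span {(X (Fin.last n) : MvPolynomial (Fin (n + 1)) k) ^ d - ∏ i : Fin n, X i.castSucc}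

namespace CyclicCover

section Retraction

variable {σ A : Type*} [Fintype σ] [CommSemiring A] {i₀ : σ} {d : ℕ} {x : σ → A} {y : A}

/-- The value at the monomial `t ^ e` of the retraction onto a cyclic cover `y ^ d = ∏ i, x i`
embedded by `x i ↦ t i ^ d`, `y ↦ ∏ i, t i`. If the exponents are all congruent to `r < d`
modulo `d`, then `t ^ e` is the image of `y ^ r * ∏ i, x i ^ (e i / d)`; the residue `r` is read
off at the index `i₀`. All other monomials are killed. -/
def retractMonomial (i₀ : σ) (d : ℕ) (x : σ → A) (y : A) (e : σ →₀ ℕ) : A :=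
  if ∀ i, e i ≡ e i₀ [MOD d] then y ^ (e i₀ % d) * ∏ i, x i ^ (e i / d) else 0

theorem retractMonomial_of_eq_mul_add (hd : 0 < d) (hxy : y ^ d = ∏ i, x i) {e q : σ →₀ ℕ} {r : ℕ}
    (he : ∀ i, e i = d * q i + r) :
    retractMonomial i₀ d x y e = y ^ r * ∏ i, x i ^ q i := by
  have e_mod (i) : e i % d = r % d := by rw [he, Nat.mul_add_mod]
  have e_div (i) : e i / d = r / d + q i := by rw [he, Nat.mul_add_div hd, add_comm]
  have e_congr (i) : e i ≡ e i₀ [MOD d] := (e_mod i).trans (e_mod i₀).symm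
  calc retractMonomial i₀ d x y e = y ^ (r % d) * ∏ i, x i ^ (r / d + q i) := by
        simp only [retractMonomial, if_pos e_congr, e_mod, e_div]
    _ = y ^ (r % d + d * (r / d)) * ∏ i, x i ^ q i := by
        simp only [pow_add, Finset.prod_mul_distrib, Finset.prod_pow, pow_mul, ← hxy, mul_assoc]
    _ = y ^ r * ∏ i, x i ^ q i := by rw [Nat.mod_add_div]

theorem retractMonomial_add (hd : 0 < d) (hxy : y ^ d = ∏ i, x i) {c p : σ →₀ ℕ} {s : ℕ}
    (hc : ∀ i, c i = d * p i + s) (e : σ →₀ ℕ) :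
    retractMonomial i₀ d x y (c + e) = (y ^ s * ∏ i, x i ^ p i) * retractMonomial i₀ d x y e := by
  by_cases he : ∀ i, e i ≡ e i₀ [MOD d]
  · obtain ⟨q, hq⟩ : ∃ q : σ →₀ ℕ, ∀ i, e i = d * q i + e i₀ % d :=
      ⟨Finsupp.equivFunOnFinite.symm fun i ↦ e i / d, fun i ↦
        (Nat.div_add_mod (e i) d).symm.trans (congrArg _ (he i))⟩
    have hcq (i) : (c + e) i = d * (p + q) i + (s + e i₀ % d) := by
      simp only [Finsupp.add_apply, hc i, hq i]
      ring
    rw [retractMonomial_of_eq_mul_add hd hxy hcq, retractMonomial_of_eq_mul_add hd hxy hq]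
    simp only [Finsupp.add_apply, pow_add, Finset.prod_mul_distrib]
    ring
  · have c_congr (i) : c i ≡ c i₀ [MOD d] := by simp [Nat.ModEq, hc]
    have hce : ¬∀ i, (c + e) i ≡ (c + e) i₀ [MOD d] := fun h ↦
      he fun i ↦ (c_congr i).add_left_cancel (h i)
    rw [retractMonomial, retractMonomial, if_neg hce, if_neg he, mul_zero]

variable {k : Type*} [CommSemiring k] [Algebra k A]

variable (k) in
/-- The retraction of `k[t]` onto a `k`-algebra with elements `x i` and `y` satisfying
`y ^ d = ∏ i, x i`, for the embedding `x i ↦ t i ^ d`, `y ↦ ∏ i, t i`. -/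
noncomputable def retraction (i₀ : σ) (d : ℕ) (x : σ → A) (y : A) :
    MvPolynomial σ k →ₗ[k] A :=
  (basisMonomials σ k).constr k (retractMonomial i₀ d x y)

theorem retraction_monomial (e : σ →₀ ℕ) :
    retraction k i₀ d x y (monomial e 1) = retractMonomial i₀ d x y e := by
  rw [retraction, ← (basisMonomials σ k).constr_basis k (retractMonomial i₀ d x y) e,
    coe_basisMonomials]

theorem retraction_one : retraction k i₀ d x y 1 = 1 := by
  rw [one_def, retraction_monomial]
  simp [retractMonomial, Nat.ModEq.refl]

theorem retraction_monomial_mul (hd : 0 < d) (hxy : y ^ d = ∏ i, x i) {c p : σ →₀ ℕ} {s : ℕ}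
    (hc : ∀ i, c i = d * p i + s) (b : MvPolynomial σ k) :
    retraction k i₀ d x y (monomial c 1 * b) =
      (y ^ s * ∏ i, x i ^ p i) * retraction k i₀ d x y b := by
  suffices retraction k i₀ d x y ∘ₗ LinearMap.mulLeft k (monomial c 1) =
      LinearMap.mulLeft k (y ^ s * ∏ i, x i ^ p i) ∘ₗ retraction k i₀ d x y from
    LinearMap.congr_fun this b
  refine (basisMonomials σ k).ext fun e ↦ ?_
  simp [monomial_mul, retraction_monomial, retractMonomial_add hd hxy hc, mul_assoc]

theorem retraction_X_pow_mul (hd : 0 < d) (hxy : y ^ d = ∏ i, x i) (j : σ) (b : MvPolynomial σ k) :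
    retraction k i₀ d x y (X j ^ d * b) = x j * retraction k i₀ d x y b := by
  classical
  have hc (i) : Finsupp.single j d i = d * Finsupp.single j 1 i + 0 := by
    simp [Finsupp.single_apply]
  rw [X_pow_eq_monomial, retraction_monomial_mul hd hxy hc]
  simp [Finsupp.single_apply]

theorem retraction_prod_X_mul (hd : 0 < d) (hxy : y ^ d = ∏ i, x i) (b : MvPolynomial σ k) :
    retraction k i₀ d x y ((∏ i, X i) * b) = y * retraction k i₀ d x y b := by
  have prod_X : ∏ i, X i = monomial (Finsupp.indicator Finset.univ fun (_ : σ) _ ↦ 1) (1 : k) := by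
    simpa using prod_X_pow (R := k) (fun _ : σ ↦ 1) Finset.univ
  have hc (i : σ) : Finsupp.indicator Finset.univ (fun _ _ ↦ 1) i = d * (0 : σ →₀ ℕ) i + 1 := by
    rw [Finsupp.indicator_of_mem (Finset.mem_univ i), Finsupp.zero_apply, mul_zero, zero_add]
  rw [prod_X, retraction_monomial_mul hd hxy hc]
  simp

theorem dvd_of_map_dvd_map [Nonempty σ] (hd : 0 < d) (hxy : y ^ d = ∏ i, x i)
    (hgen : Algebra.adjoin k (insert y (Set.range x)) = ⊤) {φ : A →ₐ[k] MvPolynomial σ k}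
    (hφx : ∀ i, φ (x i) = X i ^ d) (hφy : φ y = ∏ i, X i) {a b : A} (h : φ a ∣ φ b) : a ∣ b := by
  let ρ := retraction k (Classical.arbitrary σ) d x y
  refine dvd_of_map_dvd_map_of_retraction (ρ := ρ) retraction_one
    (map_mul_of_adjoin_eq_top hgen ?_) h
  rintro _ (rfl | ⟨j, rfl⟩) c
  · rw [hφy, retraction_prod_X_mul hd hxy]
  · rw [hφx, retraction_X_pow_mul hd hxy]

end Retraction

section Coordinates

variable (k : Type*) [CommRing k] (n d : ℕ)

/-- The class in `CyclicCover k n d` of a variable of `k[x₁, …, xₙ, y]`. -/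
noncomputable def coord (i : Fin (n + 1)) : CyclicCover k n d :=
  Ideal.Quotient.mk _ (X i)

theorem coord_last_pow : coord k n d (Fin.last n) ^ d = ∏ i : Fin n, coord k n d i.castSucc := by
  simp only [coord, ← map_pow, ← map_prod]
  exact Ideal.Quotient.eq.mpr (Ideal.mem_span_singleton_self _)

theorem adjoin_coord :
    Algebra.adjoin k (insert (coord k n d (Fin.last n))
      (Set.range fun i : Fin n ↦ coord k n d i.castSucc)) = ⊤ := by
  let π : MvPolynomial (Fin (n + 1)) k →ₐ[k] CyclicCover k n d := Ideal.Quotient.mkₐ k _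
  have π_surj : Function.Surjective π := Ideal.Quotient.mkₐ_surjective k _
  have range_coord : insert (coord k n d (Fin.last n))
      (Set.range fun i : Fin n ↦ coord k n d i.castSucc) = π '' Set.range X := by
    rw [← Fin.range_snoc, ← Set.range_comp]
    exact congrArg Set.range (Fin.snoc_init_self (coord k n d))
  rw [range_coord, ← AlgHom.map_adjoin, adjoin_range_X, Algebra.map_top]
  exact (AlgHom.range_eq_top π).mpr π_surj

/-- The pullback of functions along the map `t ↦ (t₁ ^ d, …, tₙ ^ d, t₁ ⋯ tₙ)` from affine
`n`-space to the cyclic cover. -/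
noncomputable def toMvPolynomial : CyclicCover k n d →ₐ[k] MvPolynomial (Fin n) k :=
  Ideal.Quotient.liftₐ _ (aeval (Fin.snoc (fun i ↦ X i ^ d) (∏ i, X i))) <| by
    simp only [← RingHom.mem_ker]
    refine (Ideal.span_singleton_le_iff_mem _).mpr ?_
    simp [RingHom.mem_ker, Finset.prod_pow]

@[simp]
theorem toMvPolynomial_coord_castSucc (i : Fin n) :
    toMvPolynomial k n d (coord k n d i.castSucc) = X i ^ d := by
  refine (Ideal.Quotient.lift_mk _ _ _).trans ?_
  simp

@[simp]
theorem toMvPolynomial_coord_last :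
    toMvPolynomial k n d (coord k n d (Fin.last n)) = ∏ i, X i := by
  refine (Ideal.Quotient.lift_mk _ _ _).trans ?_
  simp

end Coordinates

end CyclicCover

theorem stmt_2_general {k : Type*} [CommRing k] [IsDomain k] [IsIntegrallyClosed k] {n d : ℕ}
    (hn : 1 ≤ n) (hd : 1 ≤ d) :
    IsDomain (CyclicCover k n d) ∧ IsIntegrallyClosed (CyclicCover k n d) := by
  have : Nonempty (Fin n) := ⟨⟨0, hn⟩⟩
  have : IsIntegrallyClosed (MvPolynomial (Fin n) k) := isIntegrallyClosed_mvPolynomial (Fin n) k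
  let φ : CyclicCover k n d →+* MvPolynomial (Fin n) k := CyclicCover.toMvPolynomial k n d
  have φ_dvd (a b) : φ a ∣ φ b → a ∣ b :=
    CyclicCover.dvd_of_map_dvd_map hd (CyclicCover.coord_last_pow k n d)
      (CyclicCover.adjoin_coord k n d) (CyclicCover.toMvPolynomial_coord_castSucc k n d)
      (CyclicCover.toMvPolynomial_coord_last k n d)
  exact ⟨(injective_of_map_dvd_map φ_dvd).isDomain φ, isIntegrallyClosed_of_map_dvd_map φ_dvd⟩

/-- For `n ≥ 1` and `d ≥ 1`, the ring
`R = ℂ[x₁, …, xₙ, y]/(y^d - x₁ x₂ ⋯ xₙ)` is an integral domain which is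
integrally closed in its field of fractions (a normal domain). -/
theorem stmt_2 (n d : ℕ) (hn : 1 ≤ n) (hd : 1 ≤ d) :
    IsDomain (MvPolynomial (Fin (n + 1)) ℂ ⧸
        Ideal.span {(X (Fin.last n) : MvPolynomial (Fin (n + 1)) ℂ) ^ d -
          ∏ i : Fin n, X i.castSucc}) ∧
      IsIntegrallyClosed (MvPolynomial (Fin (n + 1)) ℂ ⧸
        Ideal.span {(X (Fin.last n) : MvPolynomial (Fin (n + 1)) ℂ) ^ d -
          ∏ i : Fin n, X i.castSucc}) :=
  stmt_2_general hn hd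
end

section
/- Let n ≥ 1 and d ≥ 1 be integers. For each tuple ζ = (ζ_1, …, ζ_n) of complex numbers with ζ_j^d = 1 for all j, let σ_ζ denote the ℂ-algebra automorphism of ℂ[u_1, …, u_n] determined by u_j ↦ ζ_j·u_j. Then a polynomial p ∈ ℂ[u_1, …, u_n] satisfies σ_ζ(p) = p for every such tuple ζ with ζ_1·ζ_2⋯ζ_n = 1 if and only if p lies in the ℂ-subalgebra generated by u_1^d, u_2^d, …, u_n^d and u_1·u_2⋯u_n. Consequently this fixed subalgebra is isomorphic to ℂ[x_1, …, x_n, y]/(y^d − x_1⋯x_n). -/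
open MvPolynomial

/-!
A rescaling `u_j ↦ ζ_j u_j` multiplies the monomial `u^m` by `∏ ζ_j ^ m_j`, so a polynomial is
invariant exactly when all its monomials are. Testing on the tuple with `ω` at `a`, `ω⁻¹` at `b` and
`1` elsewhere, `ω` a primitive `d`-th root of unity, forces the exponents of an invariant monomial
to have a common remainder `r` modulo `d`; then `u^m = (∏ u_j) ^ r * ∏ (u_j ^ d) ^ (m_j / d)`.

The relation `y ^ d = ∏ x_i` generates the kernel of `x_i ↦ u_i ^ d`, `y ↦ ∏ u_j` because the
quotient map by this relation factors through the homomorphism: the class of `x^s y^t` is recovered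
from the exponents `m_i = d * s_i + t` of its image as that of `y ^ (m_i % d) * ∏ x_i ^ (m_i / d)`.
-/

section ScaleVars

variable {ι R : Type*} [CommSemiring R]

/-- The diagonal substitution `u_j ↦ ζ_j u_j` on polynomials, the action of the tuple `ζ`. -/
noncomputable def scaleVars (ζ : ι → R) : MvPolynomial ι R →ₐ[R] MvPolynomial ι R :=
  aeval fun j => C (ζ j) * X j

lemma scaleVars_X (ζ : ι → R) (j : ι) : scaleVars ζ (X j) = C (ζ j) * X j :=
  aeval_X _ j

lemma scaleVars_monomial (ζ : ι → R) (m : ι →₀ ℕ) (c : R) :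
    scaleVars ζ (monomial m c) = monomial m ((m.prod fun j k => ζ j ^ k) * c) := by
  rw [scaleVars, aeval_monomial, algebraMap_eq, monomial_eq, C_mul, map_finsuppProd]
  simp only [mul_pow, map_pow, Finsupp.prod_mul]
  ring

lemma coeff_scaleVars (ζ : ι → R) (p : MvPolynomial ι R) (m : ι →₀ ℕ) :
    coeff m (scaleVars ζ p) = (m.prod fun j k => ζ j ^ k) * coeff m p := by
  classical
  induction p using MvPolynomial.induction_on' with
  | monomial s c =>
    rw [scaleVars_monomial, coeff_monomial, coeff_monomial]
    split_ifs with h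
    · rw [h]
    · rw [mul_zero]
  | add p q hp hq => rw [map_add, coeff_add, coeff_add, hp, hq, mul_add]

lemma prod_pow_eq_one_of_scaleVars_eq_self [IsRightCancelMulZero R] {ζ : ι → R}
    {p : MvPolynomial ι R} (hp : scaleVars ζ p = p) {m : ι →₀ ℕ} (hm : m ∈ p.support) :
    (m.prod fun j k => ζ j ^ k) = 1 := by
  rw [← mul_eq_right₀ (mem_support_iff.1 hm), ← coeff_scaleVars, hp]

end ScaleVars

lemma modEq_of_forall_prod_pow_eq_one {G ι : Type*} [CommGroup G] [Fintype ι] {ω : G} {d : ℕ}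
    (hω : IsPrimitiveRoot ω d) {m : ι → ℕ}
    (h : ∀ ζ : ι → G, (∀ j, ζ j ^ d = 1) → ∏ j, ζ j = 1 → ∏ j, ζ j ^ m j = 1) (a b : ι) :
    m a ≡ m b [MOD d] := by
  classical
  let ζ : ι → G := Pi.mulSingle a ω * Pi.mulSingle b ω⁻¹
  have prod_pow (k : ι → ℕ) : ∏ j, ζ j ^ k j = ω ^ k a * (ω ^ k b)⁻¹ := by
    simp only [ζ, Pi.mul_apply, mul_pow, Finset.prod_mul_distrib,
      Pi.apply_mulSingle (fun j (x : G) => x ^ k j) (fun j => one_pow (k j)),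
      Fintype.prod_pi_mulSingle', inv_pow]
  have hζ : ζ ^ d = 1 := by
    rw [mul_pow, ← Pi.mulSingle_pow, ← Pi.mulSingle_pow, inv_pow, hω.pow_eq_one, inv_one,
      Pi.mulSingle_one, Pi.mulSingle_one, one_mul]
  have hprod : ∏ j, ζ j = 1 := by simpa using prod_pow 1
  have hpow := (prod_pow m).symm.trans (h ζ (congr_fun hζ) hprod)
  rwa [mul_inv_eq_one, pow_eq_pow_iff_modEq, ← hω.eq_orderOf] at hpow

section PowProdSubalgebra

variable (R ι : Type*) [CommSemiring R] [Fintype ι]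

/-- The subalgebra generated by the powers `u_j ^ d` of the variables and by their product. -/
noncomputable def powProdSubalgebra (d : ℕ) : Subalgebra R (MvPolynomial ι R) :=
  Algebra.adjoin R (Set.range (fun j => X j ^ d) ∪ {∏ j, X j})

variable {R ι} {d : ℕ}

lemma scaleVars_eq_self_of_mem_powProdSubalgebra {ζ : ι → R} (hζ : ∀ j, ζ j ^ d = 1)
    (hprod : ∏ j, ζ j = 1) {p : MvPolynomial ι R} (hp : p ∈ powProdSubalgebra R ι d) :
    scaleVars ζ p = p := by
  suffices powProdSubalgebra R ι d ≤ AlgHom.equalizer (scaleVars ζ) (AlgHom.id R _) from this hp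
  refine Algebra.adjoin_le ?_
  rintro _ (⟨j, rfl⟩ | rfl)
  · change scaleVars ζ (X j ^ d) = X j ^ d
    rw [map_pow, scaleVars_X, mul_pow, ← C_pow, hζ, C_1, one_mul]
  · change scaleVars ζ (∏ j, X j) = ∏ j, X j
    simp only [map_prod, scaleVars_X, Finset.prod_mul_distrib]
    rw [← map_prod, hprod, C_1, one_mul]

lemma monomial_mem_powProdSubalgebra {m : ι →₀ ℕ} {r : ℕ} (hm : ∀ j, m j % d = r) (c : R) :
    monomial m c ∈ powProdSubalgebra R ι d := by
  have hfactor : monomial m c = c • ((∏ j, X j) ^ r * ∏ j, (X j ^ d) ^ (m j / d)) := by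
    rw [monomial_eq, C_mul', Finsupp.prod_fintype _ _ fun _ => pow_zero _, ← Finset.prod_pow,
      ← Finset.prod_mul_distrib]
    congr! 2 with j
    rw [← pow_mul, ← pow_add, ← hm j, Nat.mod_add_div]
  rw [hfactor]
  refine (powProdSubalgebra R ι d).smul_mem
    (mul_mem (pow_mem ?_ _) (prod_mem fun j _ => pow_mem ?_ _)) _
  · exact Algebra.subset_adjoin (Or.inr rfl)
  · exact Algebra.subset_adjoin (Or.inl ⟨j, rfl⟩)

end PowProdSubalgebra

theorem forall_scaleVars_eq_self_iff_mem_powProdSubalgebra {ι R : Type*} [Fintype ι] [CommRing R]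
    [IsDomain R] {ω : Rˣ} {d : ℕ} (hω : IsPrimitiveRoot ω d) (p : MvPolynomial ι R) :
    (∀ ζ : ι → R, (∀ j, ζ j ^ d = 1) → ∏ j, ζ j = 1 → scaleVars ζ p = p) ↔
      p ∈ powProdSubalgebra R ι d := by
  refine ⟨fun hp => ?_, fun hp ζ hζ hprod => scaleVars_eq_self_of_mem_powProdSubalgebra hζ hprod hp⟩
  rw [p.as_sum]
  refine sum_mem fun m hm => ?_
  have hmod : ∀ a b, m a ≡ m b [MOD d] := by
    refine modEq_of_forall_prod_pow_eq_one hω fun ζ hζ hprod => Units.ext ?_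
    have hfixed := hp (fun j => ζ j)
      (fun j => by rw [← Units.val_pow_eq_pow_val, hζ, Units.val_one])
      (by rw [← Units.coe_prod, hprod, Units.val_one])
    have hone := prod_pow_eq_one_of_scaleVars_eq_self hfixed hm
    rw [Finsupp.prod_fintype _ _ fun _ => pow_zero _] at hone
    simpa only [Units.coe_prod, Units.val_pow_eq_pow_val, Units.val_one] using hone
  obtain ⟨r, hr⟩ : ∃ r, ∀ j, m j % d = r := by
    cases isEmpty_or_nonempty ι with
    | inl _ => exact ⟨0, isEmptyElim⟩
    | inr h => exact ⟨m h.some % d, fun j => hmod j h.some⟩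
  exact monomial_mem_powProdSubalgebra hr _

section Presentation

variable (R ι : Type*) [CommRing R] [Fintype ι] (d : ℕ)

/-- The substitution `x_i ↦ u_i ^ d`, `y ↦ ∏ u_j`, where `x_i` is `X (some i)` and `y` is
`X none`. -/
noncomputable def powProdHom : MvPolynomial (Option ι) R →ₐ[R] MvPolynomial ι R :=
  aeval fun o => o.elim (∏ j, X j) fun i => X i ^ d

/-- The ideal generated by `y ^ d - ∏ x_i`, where `x_i` is `X (some i)` and `y` is `X none`. -/
noncomputable def powProdIdeal : Ideal (MvPolynomial (Option ι) R) :=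
  Ideal.span {X none ^ d - ∏ i, X (some i)}

lemma range_powProdHom : (powProdHom R ι d).range = powProdSubalgebra R ι d := by
  rw [powProdHom, ← Algebra.adjoin_range_eq_range_aeval, Option.range_elim, powProdSubalgebra,
    Set.union_singleton]

variable {ι} in
lemma powProdHom_monomial (s : Option ι →₀ ℕ) :
    powProdHom R ι d (monomial s 1) =
      monomial (Finsupp.equivFunOnFinite.symm fun i => d * s (some i) + s none) 1 := by
  rw [powProdHom, aeval_monomial, monomial_eq, Finsupp.prod_fintype _ _ fun _ => pow_zero _,
    Finsupp.prod_fintype _ _ fun _ => pow_zero _, Fintype.prod_option]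
  simp only [Option.elim, Finsupp.equivFunOnFinite_symm_apply_apply, pow_add, pow_mul,
    Finset.prod_mul_distrib, Finset.prod_pow, map_one]
  ring

lemma powProdIdeal_le_ker : powProdIdeal R ι d ≤ RingHom.ker (powProdHom R ι d) := by
  rw [powProdIdeal, Ideal.span_singleton_le_iff_mem, RingHom.mem_ker, powProdHom]
  simp [Finset.prod_pow]

lemma mk_X_none_pow : Ideal.Quotient.mk (powProdIdeal R ι d) (X none) ^ d =
    ∏ i, Ideal.Quotient.mk (powProdIdeal R ι d) (X (some i)) := by
  rw [← map_pow, ← map_prod, Ideal.Quotient.mk_eq_mk_iff_sub_mem]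
  exact Ideal.mem_span_singleton_self _

variable {ι}

/-- A linear map sending the image of a monomial under `powProdHom` back to its class modulo
`powProdIdeal`. The exponents in such an image are congruent modulo `d`, so the remainder can be
read off at any index `i₀`; the values on other monomials are irrelevant. -/
noncomputable def powProdSection (i₀ : ι) :
    MvPolynomial ι R →ₗ[R] MvPolynomial (Option ι) R ⧸ powProdIdeal R ι d :=
  (basisMonomials ι R).constr R fun m =>
    Ideal.Quotient.mk _ (X none) ^ (m i₀ % d) * ∏ i, Ideal.Quotient.mk _ (X (some i)) ^ (m i / d)

lemma powProdSection_monomial (i₀ : ι) (m : ι →₀ ℕ) :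
    powProdSection R d i₀ (monomial m 1) = Ideal.Quotient.mk _ (X none) ^ (m i₀ % d) *
      ∏ i, Ideal.Quotient.mk _ (X (some i)) ^ (m i / d) := by
  simpa only [powProdSection, coe_basisMonomials] using (basisMonomials ι R).constr_basis R _ m

variable {d} in
lemma powProdSection_comp_powProdHom (hd : 0 < d) (i₀ : ι) :
    powProdSection R d i₀ ∘ₗ (powProdHom R ι d).toLinearMap =
      (Ideal.Quotient.mkₐ R (powProdIdeal R ι d)).toLinearMap := by
  refine (basisMonomials (Option ι) R).ext fun s => ?_
  let y := Ideal.Quotient.mk (powProdIdeal R ι d) (X none)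
  let x (i : ι) := Ideal.Quotient.mk (powProdIdeal R ι d) (X (some i))
  rw [coe_basisMonomials]
  calc powProdSection R d i₀ (powProdHom R ι d (monomial s 1))
    _ = y ^ (s none % d) * ∏ i, x i ^ (s (some i) + s none / d) := by
      rw [powProdHom_monomial, powProdSection_monomial]
      simp only [Finsupp.equivFunOnFinite_symm_apply_apply, Nat.mul_add_mod, Nat.mul_add_div hd]
      rfl
    _ = y ^ (s none % d) * (y ^ d) ^ (s none / d) * ∏ i, x i ^ s (some i) := by
      simp only [pow_add, Finset.prod_mul_distrib, Finset.prod_pow, y, x, mk_X_none_pow]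
      ring
    _ = y ^ s none * ∏ i, x i ^ s (some i) := by
      rw [← pow_mul, ← pow_add, Nat.mod_add_div]
    _ = Ideal.Quotient.mk (powProdIdeal R ι d) (monomial s 1) := by
      rw [monomial_eq, C_1, one_mul, Finsupp.prod_fintype _ _ fun _ => pow_zero _,
        Fintype.prod_option]
      simp only [map_mul, map_prod, map_pow, y, x]

variable {d} in
lemma ker_powProdHom [Nonempty ι] (hd : 0 < d) :
    RingHom.ker (powProdHom R ι d) = powProdIdeal R ι d := by
  refine le_antisymm (fun p hp => ?_) (powProdIdeal_le_ker R ι d)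
  have hmk := LinearMap.congr_fun (powProdSection_comp_powProdHom R hd (Classical.arbitrary ι)) p
  rw [LinearMap.comp_apply, AlgHom.toLinearMap_apply, RingHom.mem_ker.1 hp, map_zero] at hmk
  exact Ideal.Quotient.eq_zero_iff_mem.1 hmk.symm

variable (ι) {d} in
/-- The presentation of `powProdSubalgebra` by generators `x_i`, `y` and the relation
`y ^ d = ∏ x_i`. -/
noncomputable def powProdSubalgebraEquiv [Nonempty ι] (hd : 0 < d) :
    powProdSubalgebra R ι d ≃ₐ[R] MvPolynomial (Option ι) R ⧸ powProdIdeal R ι d :=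
  (Subalgebra.equivOfEq _ _ (range_powProdHom R ι d)).symm.trans <|
    (Ideal.quotientKerEquivRange (powProdHom R ι d)).symm.trans <|
      Ideal.quotientEquivAlgOfEq R (ker_powProdHom R hd)

variable (n : ℕ)

lemma map_powProdIdeal_finSuccEquivLast :
    (powProdIdeal R (Fin n) d).map (renameEquiv R finSuccEquivLast.symm) =
      Ideal.span {X (Fin.last n) ^ d - ∏ i : Fin n, X i.castSucc} := by
  simp [powProdIdeal, Ideal.map_span]

/-- Numbering the generators as `x_1, …, x_n, y`. -/
noncomputable def powProdQuotientEquivFin :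
    (MvPolynomial (Option (Fin n)) R ⧸ powProdIdeal R (Fin n) d) ≃ₐ[R]
      MvPolynomial (Fin (n + 1)) R ⧸
        Ideal.span {(X (Fin.last n) : MvPolynomial (Fin (n + 1)) R) ^ d -
          ∏ i : Fin n, X i.castSucc} :=
  Ideal.quotientEquivAlg _ _ (renameEquiv R finSuccEquivLast.symm)
    (map_powProdIdeal_finSuccEquivLast R d n).symm

end Presentation

theorem stmt_3_general {ι R : Type*} [Fintype ι] [Nonempty ι] [CommRing R] [IsDomain R] {ω : R}
    {d : ℕ} (hd : 0 < d) (hω : IsPrimitiveRoot ω d) :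
    (∀ p : MvPolynomial ι R,
      (∀ ζ : ι → R, (∀ j, ζ j ^ d = 1) → ∏ j, ζ j = 1 → scaleVars ζ p = p) ↔
        p ∈ powProdSubalgebra R ι d) ∧
    Nonempty (powProdSubalgebra R ι d ≃ₐ[R]
      MvPolynomial (Option ι) R ⧸ powProdIdeal R ι d) :=
  ⟨forall_scaleVars_eq_self_iff_mem_powProdSubalgebra (hω.isUnit_unit hd.ne'),
    ⟨powProdSubalgebraEquiv R ι hd⟩⟩

/-- For `n ≥ 1`, `d ≥ 1`, a polynomial `p ∈ ℂ[u₁, …, uₙ]` is fixed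
by every rescaling automorphism `uⱼ ↦ ζⱼ uⱼ` with `ζⱼ^d = 1` and `ζ₁ ⋯ ζₙ = 1`
if and only if `p` lies in the `ℂ`-subalgebra generated by
`u₁^d, …, uₙ^d` and `u₁ u₂ ⋯ uₙ`.  Consequently this fixed subalgebra is
isomorphic to `ℂ[x₁, …, xₙ, y]/(y^d - x₁ ⋯ xₙ)`. -/
theorem stmt_3 (n d : ℕ) (hn : 1 ≤ n) (hd : 1 ≤ d) :
    (∀ p : MvPolynomial (Fin n) ℂ,
      (∀ ζ : Fin n → ℂ, (∀ j, ζ j ^ d = 1) → (∏ j, ζ j) = 1 →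
        MvPolynomial.aeval (fun j : Fin n => C (ζ j) * X j) p = p) ↔
      p ∈ Algebra.adjoin ℂ
        ((Set.range fun j : Fin n => (X j : MvPolynomial (Fin n) ℂ) ^ d) ∪
          {∏ j : Fin n, (X j : MvPolynomial (Fin n) ℂ)})) ∧
    Nonempty ((Algebra.adjoin ℂ
        ((Set.range fun j : Fin n => (X j : MvPolynomial (Fin n) ℂ) ^ d) ∪
          {∏ j : Fin n, (X j : MvPolynomial (Fin n) ℂ)})) ≃ₐ[ℂ]
      (MvPolynomial (Fin (n + 1)) ℂ ⧸
        Ideal.span {(X (Fin.last n) : MvPolynomial (Fin (n + 1)) ℂ) ^ d -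
          ∏ i : Fin n, X i.castSucc})) := by
  have : Nonempty (Fin n) := Fin.pos_iff_nonempty.mp hn
  have hω := Complex.isPrimitiveRoot_exp d (Nat.ne_of_gt hd)
  obtain ⟨hinv, ⟨e⟩⟩ := stmt_3_general (ι := Fin n) hd hω
  exact ⟨hinv, ⟨e.trans (powProdQuotientEquivFin ℂ d n)⟩⟩
end

section
/- For every integer d ≥ 1 the following identity holds in the polynomial ring ℤ[y, z]: ∑_{i=1}^{d−1} (1 − z)^{i−1}·(1 + yz)^{d−1−i} = ∑_{n=0}^{d−2} C(d−1, n+1)·(∑_{j=0}^{n} (−1)^{n−j} y^j)·z^n, where C(d−1, n+1) denotes the binomial coefficient. -/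
open MvPolynomial

/-!
The left-hand side is the divided difference of `t ↦ (1 + t) ^ (d - 1)` at the points `-z` and
`y * z`. Expanding `(1 + t) ^ (d - 1)` by the binomial theorem and taking divided differences of the
monomials `t ^ (n + 1)` gives the complete homogeneous sums of degree `n` in `-z` and `y * z`, from
which `z ^ n` factors out. Comparing recursions in the exponent, instead of multiplying by
`y * z - (-z)`, avoids any cancellation.
-/

section BinomialDividedDifference

open Finset

variable {R : Type*}

theorem sum_range_succ_pow_mul_pow_sub [Semiring R] (a b : R) (n : ℕ) :
    ∑ i ∈ range (n + 1), a ^ i * b ^ (n - i) =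
      (∑ i ∈ range n, a ^ i * b ^ (n - 1 - i)) * b + a ^ n := by
  rw [sum_range_succ, Nat.sub_self, pow_zero, mul_one, sum_mul]
  congr 1
  refine sum_congr rfl fun i hi => ?_
  have hexp : n - i = n - 1 - i + 1 := by have := mem_range.mp hi; omega
  rw [hexp, pow_succ, mul_assoc]

theorem one_add_pow_eq_sum_choose_succ_add_one [Semiring R] (a : R) (m : ℕ) :
    (1 + a) ^ m = ∑ n ∈ range m, (m.choose (n + 1) : R) * a ^ (n + 1) + 1 := by
  rw [add_comm, (Commute.one_right a).add_pow, sum_range_succ']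
  simp [Nat.cast_comm]

theorem sum_choose_mul_sum_pow_mul_pow_sub [Semiring R] (a b : R) (m : ℕ) :
    ∑ n ∈ range (m + 1), (m.choose n : R) * ∑ j ∈ range (n + 1), a ^ j * b ^ (n - j) =
      (∑ n ∈ range m, (m.choose (n + 1) : R) * ∑ j ∈ range (n + 1), a ^ j * b ^ (n - j)) * b +
        (1 + a) ^ m := by
  rw [sum_range_succ', one_add_pow_eq_sum_choose_succ_add_one, ← add_assoc, sum_mul,
    ← sum_add_distrib]
  congr 1
  · refine sum_congr rfl fun n _ => ?_
    rw [sum_range_succ_pow_mul_pow_sub a b (n + 1), Nat.add_sub_cancel, mul_add, mul_assoc]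
  · simp

theorem sum_one_add_pow_mul_one_add_pow_sub [Semiring R] (a b : R) (m : ℕ) :
    ∑ i ∈ range m, (1 + a) ^ i * (1 + b) ^ (m - 1 - i) =
      ∑ n ∈ range m, (m.choose (n + 1) : R) * ∑ j ∈ range (n + 1), a ^ j * b ^ (n - j) := by
  induction m with
  | zero => simp
  | succ m ih =>
    let h (n : ℕ) : R := ∑ j ∈ range (n + 1), a ^ j * b ^ (n - j)
    have pascal : ∑ n ∈ range (m + 1), ((m + 1).choose (n + 1) : R) * h n =
        ∑ n ∈ range (m + 1), (m.choose n : R) * h n +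
          ∑ n ∈ range m, (m.choose (n + 1) : R) * h n := by
      simp only [Nat.choose_succ_succ', Nat.cast_add, add_mul, sum_add_distrib]
      rw [sum_range_succ (fun n => (m.choose (n + 1) : R) * h n), Nat.choose_succ_self,
        Nat.cast_zero, zero_mul, add_zero]
    calc ∑ i ∈ range (m + 1), (1 + a) ^ i * (1 + b) ^ (m - i)
      _ = (∑ n ∈ range m, (m.choose (n + 1) : R) * h n) * (1 + b) + (1 + a) ^ m := by
        rw [sum_range_succ_pow_mul_pow_sub, ih]
      _ = ∑ n ∈ range (m + 1), (m.choose n : R) * h n +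
            ∑ n ∈ range m, (m.choose (n + 1) : R) * h n := by
        rw [sum_choose_mul_sum_pow_mul_pow_sub, mul_add, mul_one, add_assoc, add_comm]
      _ = ∑ n ∈ range (m + 1), ((m + 1).choose (n + 1) : R) * h n := pascal.symm

theorem sum_neg_pow_mul_mul_pow_sub [Ring R] {y z : R} (hyz : Commute y z) (n : ℕ) :
    ∑ j ∈ range (n + 1), (-z) ^ j * (y * z) ^ (n - j) =
      (∑ j ∈ range (n + 1), (-1) ^ (n - j) * y ^ j) * z ^ n := by
  rw [← sum_flip, sum_mul]
  refine sum_congr rfl fun j hj => ?_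
  have hjn : j ≤ n := mem_range_succ_iff.mp hj
  calc (-z) ^ (n - j) * (y * z) ^ (n - (n - j))
    _ = (-1) ^ (n - j) * (z ^ (n - j) * y ^ j) * z ^ j := by
      rw [Nat.sub_sub_self hjn, neg_pow, hyz.mul_pow]
      simp only [mul_assoc]
    _ = (-1) ^ (n - j) * y ^ j * z ^ n := by
      rw [← (hyz.pow_pow j (n - j)).eq, ← mul_assoc, mul_assoc, ← pow_add, Nat.sub_add_cancel hjn]

theorem stmt_4_general [Ring R] {y z : R} (hyz : Commute y z) (m : ℕ) :
    ∑ i ∈ Icc 1 m, (1 - z) ^ (i - 1) * (1 + y * z) ^ (m - i) =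
      ∑ n ∈ range m,
        (m.choose (n + 1) : R) * (∑ j ∈ range (n + 1), (-1) ^ (n - j) * y ^ j) * z ^ n := by
  calc ∑ i ∈ Icc 1 m, (1 - z) ^ (i - 1) * (1 + y * z) ^ (m - i)
    _ = ∑ i ∈ range m, (1 + -z) ^ i * (1 + y * z) ^ (m - 1 - i) := by
      rw [← Ico_add_one_right_eq_Icc, sum_Ico_eq_sum_range]
      simp only [Nat.add_sub_cancel, Nat.add_sub_cancel_left, Nat.sub_sub, sub_eq_add_neg]
    _ = ∑ n ∈ range m,
          (m.choose (n + 1) : R) * ∑ j ∈ range (n + 1), (-z) ^ j * (y * z) ^ (n - j) :=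
      sum_one_add_pow_mul_one_add_pow_sub (-z) (y * z) m
    _ = _ := by simp only [sum_neg_pow_mul_mul_pow_sub hyz, mul_assoc]

end BinomialDividedDifference

/-- For every `d ≥ 1`, in `ℤ[y, z]` (with `y = X 0`, `z = X 1`):
`∑_{i=1}^{d-1} (1-z)^{i-1} (1+yz)^{d-1-i}
  = ∑_{n=0}^{d-2} C(d-1, n+1) (∑_{j=0}^{n} (-1)^{n-j} y^j) z^n`. -/
theorem stmt_4 (d : ℕ) (hd : 1 ≤ d) :
    ∑ i ∈ Finset.Icc 1 (d - 1),
        (1 - (X 1 : MvPolynomial (Fin 2) ℤ)) ^ (i - 1) *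
          (1 + X 0 * X 1) ^ (d - 1 - i) =
      ∑ n ∈ Finset.range (d - 1),
        ((d - 1).choose (n + 1) : MvPolynomial (Fin 2) ℤ) *
          (∑ j ∈ Finset.range (n + 1), (-1) ^ (n - j) * (X 0 : MvPolynomial (Fin 2) ℤ) ^ j) *
          X 1 ^ n := by
  exact stmt_4_general (Commute.all _ _) (d - 1)
end

section
/- Let d ≥ 1 be an integer, let V be a finite-dimensional vector space over ℚ, and let g be a ℚ-linear automorphism of V with g^d = id. Let ζ ∈ ℂ be a primitive d-th root of unity, and let m be the ℂ-dimension of the ζ-eigenspace of the complexification g_ℂ acting on ℂ ⊗_ℚ V. Suppose W ⊆ V is a ℚ-subspace with g(W) = W such that ℂ ⊗_ℚ W (viewed inside ℂ ⊗_ℚ V) contains no nonzero ζ-eigenvector of g_ℂ. Then dim_ℚ W ≤ dim_ℚ V − φ(d)·m, where φ is Euler's totient function. -/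
open TensorProduct

/-!
An invariant subspace `W` whose scalar extension misses the `μ`-eigenspace lets that eigenspace
embed into the `μ`-eigenspace on `L ⊗ (V ⧸ W)`. The characteristic polynomial of the endomorphism
induced on `V ⧸ W` has coefficients in the small field `K`, so as a root of it `μ` brings all its
conjugates along with the same multiplicity. Hence `deg μ` times the dimension of the eigenspace is
at most `dim (V ⧸ W)`; for a primitive `d`-th root of unity over `ℚ`, `deg μ = φ(d)`.
-/

section Polynomial

open Polynomial

variable {K L : Type*} [Field K] [CommRing L] [IsDomain L] [Algebra K L] {μ : L}

theorem rootMultiplicity_pow_map_minpoly_le (hμ : IsSeparable K μ) (n : ℕ) :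
    rootMultiplicity μ ((minpoly K μ).map (algebraMap K L) ^ n) ≤ n := by
  classical
  have hsimple : rootMultiplicity μ ((minpoly K μ).map (algebraMap K L)) ≤ 1 :=
    rootMultiplicity_le_one_of_separable (Separable.map hμ) μ
  rw [← count_roots, roots_pow, Multiset.count_nsmul, count_roots]
  exact mul_le_of_le_one_right n.zero_le hsimple

theorem natDegree_minpoly_mul_rootMultiplicity_map_le (hμ : IsSeparable K μ) {p : K[X]}
    (hp : p ≠ 0) :
    (minpoly K μ).natDegree * rootMultiplicity μ (p.map (algebraMap K L)) ≤ p.natDegree := by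
  obtain ⟨q, hpq, hq⟩ := (FiniteMultiplicity.of_not_isUnit (minpoly.not_isUnit K μ)
    hp).exists_eq_pow_mul_and_not_dvd
  set n := multiplicity (minpoly K μ) p
  have hq_root : ¬ IsRoot (q.map (algebraMap K L)) μ := by
    rw [IsRoot.def, eval_map_algebraMap]
    exact fun h ↦ hq (minpoly.dvd K μ h)
  have hmult : rootMultiplicity μ (p.map (algebraMap K L)) ≤ n := by
    have hp_map := Polynomial.map_ne_zero (f := algebraMap K L) hp
    rw [hpq, Polynomial.map_mul, Polynomial.map_pow] at hp_map ⊢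
    rw [rootMultiplicity_mul hp_map, rootMultiplicity_eq_zero hq_root, add_zero]
    exact rootMultiplicity_pow_map_minpoly_le hμ n
  calc
    (minpoly K μ).natDegree * rootMultiplicity μ (p.map (algebraMap K L))
      ≤ (minpoly K μ).natDegree * n := by gcongr
    _ = (minpoly K μ ^ n).natDegree := by rw [natDegree_pow, mul_comm]
    _ ≤ p.natDegree := natDegree_le_of_dvd (Dvd.intro q hpq.symm) hp

end Polynomial

theorem ker_baseChange_mkQ {R M : Type*} (A : Type*) [CommRing R] [Ring A] [Algebra R A]
    [AddCommGroup M] [Module R M] (N : Submodule R M) :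
    LinearMap.ker (N.mkQ.baseChange A) = N.baseChange A :=
  SetLike.ext fun x ↦ SetLike.ext_iff.1 (lTensor_mkQ A N) x

section Eigenspace

open Module Module.End

theorem finrank_eigenspace_le_of_comp_eq {R M M' : Type*} [CommRing R] [Nontrivial R]
    [AddCommGroup M] [Module R M] [AddCommGroup M'] [Module R M'] {f : End R M} {f' : End R M'}
    {φ : M →ₗ[R] M'} {μ : R} [Module.Finite R (f'.eigenspace μ)] (hφ : φ ∘ₗ f = f' ∘ₗ φ)
    (hker : Disjoint (LinearMap.ker φ) (f.eigenspace μ)) :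
    finrank R (f.eigenspace μ) ≤ finrank R (f'.eigenspace μ) := by
  have hmaps : ∀ x ∈ f.eigenspace μ, φ x ∈ f'.eigenspace μ := fun x hx ↦ by
    rw [mem_eigenspace_iff] at hx ⊢
    rw [← LinearMap.comp_apply, ← hφ, LinearMap.comp_apply, hx, map_smul]
  refine LinearMap.finrank_le_finrank_of_injective (f := φ.restrict hmaps) ?_
  rw [← LinearMap.ker_eq_bot, LinearMap.ker_restrict]
  exact Submodule.disjoint_iff_comap_eq_bot.1 hker.symm

variable {K L V : Type*} [Field K] [Field L] [Algebra K L] [AddCommGroup V] [Module K V]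
  {μ : L}

theorem natDegree_minpoly_mul_finrank_eigenspace_baseChange_le [FiniteDimensional K V]
    (hμ : IsSeparable K μ) (f : End K V) :
    (minpoly K μ).natDegree * finrank L (eigenspace (f.baseChange L) μ) ≤ finrank K V :=
  calc
    (minpoly K μ).natDegree * finrank L (eigenspace (f.baseChange L) μ)
      ≤ (minpoly K μ).natDegree * (f.charpoly.map (algebraMap K L)).rootMultiplicity μ := by
        rw [← LinearMap.charpoly_baseChange]
        gcongr
        exact LinearMap.finrank_eigenspace_le _ μ
    _ ≤ f.charpoly.natDegree :=
        natDegree_minpoly_mul_rootMultiplicity_map_le hμ f.charpoly_monic.ne_zero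
    _ = finrank K V := f.charpoly_natDegree

theorem finrank_eigenspace_baseChange_le_mapQ {g : End K V} {W : Submodule K V}
    [FiniteDimensional K (V ⧸ W)] (hW : W ≤ W.comap g)
    (hmiss : Disjoint (W.baseChange L) (eigenspace (g.baseChange L) μ)) :
    finrank L (eigenspace (g.baseChange L) μ) ≤
      finrank L (eigenspace ((W.mapQ W g hW).baseChange L) μ) := by
  refine finrank_eigenspace_le_of_comp_eq (φ := W.mkQ.baseChange L) ?_ ?_
  · rw [← LinearMap.baseChange_comp, ← LinearMap.baseChange_comp, Submodule.mapQ_mkQ]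
  · rwa [ker_baseChange_mkQ]

theorem natDegree_minpoly_mul_finrank_eigenspace_baseChange_le_finrank_quotient
    (hμ : IsSeparable K μ) {g : End K V} {W : Submodule K V} [FiniteDimensional K (V ⧸ W)]
    (hW : W ≤ W.comap g) (hmiss : Disjoint (W.baseChange L) (eigenspace (g.baseChange L) μ)) :
    (minpoly K μ).natDegree * finrank L (eigenspace (g.baseChange L) μ) ≤ finrank K (V ⧸ W) :=
  (Nat.mul_le_mul_left _ (finrank_eigenspace_baseChange_le_mapQ hW hmiss)).trans
    (natDegree_minpoly_mul_finrank_eigenspace_baseChange_le hμ _)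

theorem stmt_6_general [FiniteDimensional K V] (hμ : IsSeparable K μ) {g : End K V}
    {W : Submodule K V} (hW : W ≤ W.comap g)
    (hmiss : Disjoint (W.baseChange L) (eigenspace (g.baseChange L) μ)) :
    (finrank K W : ℤ) ≤ (finrank K V : ℤ) -
      ((minpoly K μ).natDegree : ℤ) * (finrank L (eigenspace (g.baseChange L) μ) : ℤ) := by
  have hquot :=
    natDegree_minpoly_mul_finrank_eigenspace_baseChange_le_finrank_quotient hμ hW hmiss
  have hdim := W.finrank_quotient_add_finrank
  zify at hquot hdim
  linarith

end Eigenspace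

/-- If `g` is a `ℚ`-linear automorphism of a finite-dimensional
`ℚ`-vector space `V` with `g^d = 1`, `ζ` a primitive `d`-th root of unity, `m`
the complex dimension of the `ζ`-eigenspace of the complexification of `g`, and
`W ⊆ V` a `g`-invariant `ℚ`-subspace whose complexification contains no nonzero
`ζ`-eigenvector of `g_ℂ`, then `dim_ℚ W ≤ dim_ℚ V − φ(d) · m`. -/
theorem stmt_6 (d : ℕ) (hd : 1 ≤ d) (V : Type*) [AddCommGroup V] [Module ℚ V]
    [FiniteDimensional ℚ V] (g : Module.End ℚ V) (hg : g ^ d = 1)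
    (ζ : ℂ) (hζ : IsPrimitiveRoot ζ d)
    (W : Submodule ℚ V) (hW : W.map g = W)
    (hmiss : LinearMap.range (LinearMap.baseChange ℂ W.subtype) ⊓
        Module.End.eigenspace (LinearMap.baseChange ℂ g) ζ = ⊥) :
    (Module.finrank ℚ W : ℤ) ≤ (Module.finrank ℚ V : ℤ) -
      (Nat.totient d : ℤ) *
        (Module.finrank ℂ (Module.End.eigenspace (LinearMap.baseChange ℂ g) ζ) : ℤ) := by
  rw [← Polynomial.natDegree_cyclotomic d ℚ, Polynomial.cyclotomic_eq_minpoly_rat hζ hd]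
  exact stmt_6_general (minpoly.irreducible (hζ.isIntegral hd).tower_top).separable
    (Submodule.map_le_iff_le_comap.1 hW.le) (disjoint_iff.2 hmiss)
end
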